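/- Let γ ∈ (0,1) and ρ ∈ (0,1), and set I = ∫_0^1 x^{−2γ} (1−ρ)^{(1/(1−γ) − 1 + γ)·x^{−γ}} dx. If log(1/(1−ρ)) > 1/(γ·(1/(1−γ) − 1 + γ)), then I < 1. -/

import Mathlib

noncomputable section

/-- `I = ∫_0^1 x^{−2γ} (1−ρ)^{(1/(1−γ) − 1 + γ)·x^{−γ}} dx`. -/
def snrIntegral (γ ρ : ℝ) : ℝ :=
  ∫ x in Set.Ioc (0 : ℝ) 1,
    x ^ (-(2 * γ)) * (1 - ρ) ^ ((1 / (1 - γ) - 1 + γ) * x ^ (-γ))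

/-- For `γ ∈ (0,1)` and `ρ ∈ (0,1)`, if
`log(1/(1−ρ)) > 1/(γ·(1/(1−γ) − 1 + γ))` then `I < 1`. -/
theorem snrIntegral_lt_one_first_criterion
    (γ ρ : ℝ) (hγ : γ ∈ Set.Ioo (0 : ℝ) 1) (hρ : ρ ∈ Set.Ioo (0 : ℝ) 1)
    (h : 1 / (γ * (1 / (1 - γ) - 1 + γ)) < Real.log (1 / (1 - ρ))) :
    snrIntegral γ ρ < 1 := by
  obtain ⟨hg0, hg1⟩ := hγ
  obtain ⟨hr0, hr1⟩ := hρ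
  have hk : 0 < 1 / (1 - γ) - 1 + γ := by
    have : 1 < 1 / (1 - γ) := by
      rw [lt_div_iff₀ (by linarith)]; linarith
    linarith
  unfold snrIntegral
  set k := 1 / (1 - γ) - 1 + γ with hkdef
  rw [one_div (1 - ρ), Real.log_inv, div_lt_iff₀ (by positivity)] at h
  have hLk : 1 < -Real.log (1 - ρ) * k := by
    have hL : 0 < -Real.log (1 - ρ) := by
      have := Real.log_neg (x := 1 - ρ) (by linarith) (by linarith)
      linarith
    have : 0 < -Real.log (1 - ρ) * k := by positivity
    nlinarith
  have hC : 4 * Real.exp (-2) < 1 := by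
    have h1 := Real.exp_one_gt_d9
    have h2 : Real.exp 2 = Real.exp 1 * Real.exp 1 := by
      rw [← Real.exp_add]; norm_num
    rw [Real.exp_neg, ← div_eq_mul_inv, div_lt_one (Real.exp_pos _), h2]
    nlinarith
  have hb : ∀ x ∈ Set.Ioc (0 : ℝ) 1,
      ‖x ^ (-(2 * γ)) * (1 - ρ) ^ (k * x ^ (-γ))‖ ≤ 4 * Real.exp (-2) := by
    intro x hx
    have hx0 := hx.1
    have hu : 0 < x ^ (-γ) := Real.rpow_pos_of_pos hx0 _
    have h2 : x ^ (-(2 * γ)) = (x ^ (-γ)) ^ 2 := by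
      rw [pow_two, ← Real.rpow_add hx0]; congr 1; ring
    rw [h2, Real.rpow_def_of_pos (by linarith : (0 : ℝ) < 1 - ρ),
      Real.norm_of_nonneg (by positivity)]
    generalize x ^ (-γ) = u at hu
    have h3 : Real.exp (Real.log (1 - ρ) * (k * u)) ≤ Real.exp (-u) := by
      apply Real.exp_le_exp.2
      nlinarith
    have h4 : u ≤ 2 * Real.exp (u / 2 - 1) := by
      have := Real.add_one_le_exp (u / 2 - 1)
      linarith
    calc u ^ 2 * Real.exp (Real.log (1 - ρ) * (k * u))
        ≤ (2 * Real.exp (u / 2 - 1)) ^ 2 * Real.exp (-u) := by gcongr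
      _ = 4 * Real.exp (-2) := by
        rw [mul_pow, ← Real.exp_nat_mul, mul_assoc, ← Real.exp_add]
        norm_num
        ring
  have := MeasureTheory.norm_setIntegral_le_of_norm_le_const
    (μ := MeasureTheory.volume) (s := Set.Ioc (0 : ℝ) 1) (by simp) hb
  simp only [Real.volume_real_Ioc] at this
  norm_num at this
  exact lt_of_le_of_lt (le_abs_self _) (lt_of_le_of_lt (by simpa [abs_mul] using this) hC)
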